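/- Let f : ℝ → ℝ be bounded and regulated, and satisfy the no-jamming condition. If xₙ : [0,∞) → ℝ is a sequence of Carathéodory solutions of ẋ = f(x) which converges to a function x̄ uniformly on every bounded subset of [0,∞), then x̄ is also a Carathéodory solution of ẋ = f(x). In other words, the set of Carathéodory solutions is closed with respect to uniform convergence on bounded sets. -/

import Mathlib

open MeasureTheory Set Filter

/-- `f` is regulated with left limits `fl` and right limits `fr`. -/
def Regulated (f fl fr : ℝ → ℝ) : Prop :=
  ∀ y : ℝ,
    Filter.Tendsto f (nhdsWithin y (Set.Iio y)) (nhds (fl y)) ∧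
    Filter.Tendsto f (nhdsWithin y (Set.Ioi y)) (nhds (fr y))

/-- The no-jamming condition: if `f(y−)·f(y+) = 0` or `f(y−) > 0 > f(y+)`, then `f(y) = 0`. -/
def NoJamming (f fl fr : ℝ → ℝ) : Prop :=
  ∀ y : ℝ, (fl y * fr y = 0 ∨ (0 < fl y ∧ fr y < 0)) → f y = 0

/-!
For `|f| ≤ K`, the Carathéodory solutions of `ẋ = f(x)` are exactly the `K`-Lipschitz functions
with `ẋ = f(x)` almost everywhere, so a limit `x` of solutions `xₙ` is `K`-Lipschitz and it remains
to compute `ẋ(t)` at almost every `t`. A function moves with nonzero speed through a countable set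
only at countably many times, and `f` has countably many discontinuities. Hence, for almost every
`t`, either `f` is continuous at `x(t)`, where `ẋ(t) = f(x(t))` follows by comparing slopes, or
`ẋ(t) = 0`.

Suppose `ẋ(t) = 0` but `f(y) ≠ 0` at `y = x(t)`. Then `f(y−)` and `f(y+)` are nonzero. Let `φ` be
the continuous function with slope `f(y−)` to the left of `y` and `f(y+)` to the right. Since
`f(y) ≠ 0`, solutions spend no time at `y` itself, and nearby the derivative `φ′(xₙ) f(xₙ)` of
`φ ∘ xₙ` is bounded below by some `c > 0`, as `φ′ f` is close to `f(y−)²` or `f(y+)²`. In the limit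
`φ ∘ x` grows at least at rate `c` to the right of `t`, whereas its derivative at `t` is `0`.
-/

open scoped Topology NNReal

/-! ### Regulated functions -/

lemma countable_of_forall_eventually_notMem {X : Type*} [TopologicalSpace X]
    [SecondCountableTopology X] {S : Set X} (hS : ∀ x ∈ S, ∀ᶠ z in 𝓝[≠] x, z ∉ S) :
    S.Countable := by
  have : DiscreteTopology S := discreteTopology_subtype_iff.2 fun x hx =>
    disjoint_iff.1 <| disjoint_principal_right.2 (hS x hx)
  exact TopologicalSpace.separableSpace_iff_countable.1 inferInstance

lemma eventually_eventually_dist_lt_of_tendsto_nhdsWithin {X Y : Type*} [TopologicalSpace X]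
    [PseudoMetricSpace Y] {g : X → Y} {s : Set X} {x : X} {y : Y} (hs : IsOpen s)
    (hg : Tendsto g (𝓝[s] x) (𝓝 y)) {ε : ℝ} (hε : 0 < ε) :
    ∀ᶠ z in 𝓝[s] x, ∀ᶠ w in 𝓝 z, dist (g w) (g z) < ε := by
  have near_limit : ∀ᶠ z in 𝓝[s] x, dist (g z) y < ε / 2 :=
    Metric.tendsto_nhds.1 hg _ (half_pos hε)
  filter_upwards [near_limit, eventually_eventually_nhdsWithin.2 near_limit,
    self_mem_nhdsWithin] with z hz hnear hzs
  rw [hs.nhdsWithin_eq hzs] at hnear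
  filter_upwards [hnear] with w hw
  linarith [dist_triangle_right (g w) (g z) y]

namespace Regulated

variable {f fl fr : ℝ → ℝ}

lemma eventually_nhdsNE_eventually_dist_lt (hf : Regulated f fl fr) (y : ℝ) {ε : ℝ}
    (hε : 0 < ε) : ∀ᶠ z in 𝓝[≠] y, ∀ᶠ w in 𝓝 z, dist (f w) (f z) < ε := by
  rw [← nhdsLT_sup_nhdsGT, eventually_sup]
  exact ⟨eventually_eventually_dist_lt_of_tendsto_nhdsWithin isOpen_Iio (hf y).1 hε,
    eventually_eventually_dist_lt_of_tendsto_nhdsWithin isOpen_Ioi (hf y).2 hε⟩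

lemma countable_not_continuousAt (hf : Regulated f fl fr) :
    {y | ¬ContinuousAt f y}.Countable := by
  have countable_large_oscillation (n : ℕ) :
      {y | ¬∀ᶠ w in 𝓝 y, dist (f w) (f y) < 1 / ((n : ℝ) + 1)}.Countable := by
    refine countable_of_forall_eventually_notMem fun y _ => ?_
    filter_upwards [hf.eventually_nhdsNE_eventually_dist_lt y Nat.one_div_pos_of_nat] with z hz
    exact not_not_intro hz
  refine (countable_iUnion countable_large_oscillation).mono fun y hy => ?_
  by_contra hsmall
  simp only [mem_iUnion, mem_ofPred_eq, not_exists, not_not] at hsmall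
  refine hy (Metric.continuousAt_iff'.2 fun ε hε => ?_)
  obtain ⟨n, hn⟩ := exists_nat_one_div_lt hε
  exact (hsmall n).mono fun w hw => hw.trans hn

lemma measurable (hf : Regulated f fl fr) : Measurable f :=
  measurable_of_countable_not_continuousAt hf.countable_not_continuousAt

lemma leftLim_eq_of_continuousAt (hf : Regulated f fl fr) {y : ℝ} (hy : ContinuousAt f y) :
    fl y = f y :=
  tendsto_nhds_unique (hf y).1 (hy.tendsto.mono_left nhdsWithin_le_nhds)

lemma rightLim_eq_of_continuousAt (hf : Regulated f fl fr) {y : ℝ} (hy : ContinuousAt f y) :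
    fr y = f y :=
  tendsto_nhds_unique (hf y).2 (hy.tendsto.mono_left nhdsWithin_le_nhds)

end Regulated

/-! ### Derivatives of real functions -/

lemma countable_setOf_eq_and_deriv_ne_zero {E : Type*} [NormedAddCommGroup E] [NormedSpace ℝ E]
    (g : ℝ → E) (y : E) : {t | g t = y ∧ deriv g t ≠ 0}.Countable := by
  refine countable_of_forall_eventually_notMem fun t ⟨_, hne⟩ => ?_
  filter_upwards [(differentiableAt_of_deriv_ne_zero hne).hasDerivAt.eventually_ne hne]
    with z hz hmem using hz hmem.1

lemma ae_deriv_eq_zero_of_mem_countable {E : Type*} [NormedAddCommGroup E] [NormedSpace ℝ E]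
    (g : ℝ → E) {S : Set E} (hS : S.Countable) : ∀ᵐ t, g t ∈ S → deriv g t = 0 := by
  have hcount : (⋃ y ∈ S, {t | g t = y ∧ deriv g t ≠ 0}).Countable :=
    hS.biUnion fun y _ => countable_setOf_eq_and_deriv_ne_zero g y
  filter_upwards [hcount.ae_notMem volume] with t ht hmem
  by_contra hne
  exact ht (mem_biUnion hmem ⟨rfl, hne⟩)

lemma mul_sub_le_sub_of_ae_le_deriv {g : ℝ → ℝ} {a b c : ℝ} (hab : a ≤ b)
    (hg : AbsolutelyContinuousOnInterval g a b) (hc : ∀ᵐ s, s ∈ Icc a b → c ≤ deriv g s) :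
    c * (b - a) ≤ g b - g a :=
  calc c * (b - a) = ∫ _ in a..b, c := by
        rw [intervalIntegral.integral_const, smul_eq_mul, mul_comm]
    _ ≤ ∫ s in a..b, deriv g s :=
        intervalIntegral.integral_mono_ae_restrict hab intervalIntegrable_const
          hg.intervalIntegrable_deriv ((ae_restrict_iff' measurableSet_Icc).2 hc)
    _ = g b - g a := hg.integral_deriv_eq_sub

lemma le_of_hasDerivWithinAt_of_eventually_mul_sub_le {g : ℝ → ℝ} {v c t : ℝ}
    (hg : HasDerivWithinAt g v (Ioi t) t)
    (hc : ∀ᶠ u in 𝓝[>] t, c * (u - t) ≤ g u - g t) : c ≤ v := by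
  refine ge_of_tendsto ((hasDerivWithinAt_iff_tendsto_slope' self_notMem_Ioi).1 hg) ?_
  filter_upwards [hc, self_mem_nhdsWithin] with u hu htu
  rwa [slope_def_field, le_div_iff₀ (sub_pos.2 htu)]

lemma hasDerivAt_zero_comp_of_lipschitzWith {E F : Type*} [NormedAddCommGroup E]
    [NormedSpace ℝ E] [NormedAddCommGroup F] [NormedSpace ℝ F] {φ : E → F} {L : ℝ≥0}
    (hφ : LipschitzWith L φ) {g : ℝ → E} {t : ℝ} (hg : HasDerivAt g 0 t) :
    HasDerivAt (φ ∘ g) 0 t := by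
  rw [hasDerivAt_iff_isLittleO] at hg ⊢
  simp only [smul_zero, sub_zero] at hg ⊢
  refine (Asymptotics.IsBigO.of_bound L (Eventually.of_forall fun u => ?_)).trans_isLittleO hg
  exact hφ.norm_sub_le (g u) (g t)

/-! ### Limits of Lipschitz functions -/

lemma lipschitzOnWith_of_tendsto {ι X Y : Type*} [PseudoMetricSpace X] [PseudoMetricSpace Y]
    {l : Filter ι} [l.NeBot] {K : ℝ≥0} {s : Set X} {g : ι → X → Y} {h : X → Y}
    (hg : ∀ i, LipschitzOnWith K (g i) s)
    (hlim : ∀ a ∈ s, Tendsto (fun i => g i a) l (𝓝 (h a))) : LipschitzOnWith K h s :=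
  LipschitzOnWith.of_dist_le_mul fun a ha b hb =>
    le_of_tendsto ((hlim a ha).dist (hlim b hb))
      (Eventually.of_forall fun i => (hg i).dist_le_mul a ha b hb)

lemma eventually_eventually_forall_Icc_mem_of_lipschitzOnWith
    {ι E : Type*} [PseudoMetricSpace E] {l : Filter ι} {K : ℝ≥0} {x : ι → ℝ → E} {t : ℝ} {y : E}
    (hx : ∀ i, LipschitzOnWith K (x i) (Ici t)) (hlim : Tendsto (fun i => x i t) l (𝓝 y))
    {U : Set E} (hU : U ∈ 𝓝 y) :
    ∀ᶠ u in 𝓝[>] t, ∀ᶠ i in l, ∀ s ∈ Icc t u, x i s ∈ U := by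
  obtain ⟨δ, hδ, hball⟩ := Metric.mem_nhds_iff.1 hU
  have hsmall : ∀ᶠ u in 𝓝[>] t, K * (u - t) < δ / 2 := by
    have htendsto : Tendsto (fun u => K * (u - t)) (𝓝[>] t) (𝓝 (K * (t - t))) :=
      (Continuous.tendsto (by fun_prop) t).mono_left nhdsWithin_le_nhds
    exact htendsto.eventually_lt_const (by simpa using hδ)
  filter_upwards [hsmall] with u hu
  filter_upwards [Metric.tendsto_nhds.1 hlim _ (half_pos hδ)] with i hi s hs
  refine hball ?_
  calc dist (x i s) y ≤ dist (x i s) (x i t) + dist (x i t) y := dist_triangle _ _ _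
    _ ≤ K * dist s t + dist (x i t) y := by
        gcongr
        exact (hx i).dist_le_mul s hs.1 t self_mem_Ici
    _ ≤ K * (u - t) + dist (x i t) y := by
        rw [Real.dist_eq s t, abs_of_nonneg (sub_nonneg.2 hs.1)]
        gcongr
        exact hs.2
    _ < δ := by linarith

/-! ### Broken lines -/

/-- The continuous piecewise linear function that vanishes at `y`, with slope `a` on `(-∞, y]` and
slope `b` on `[y, ∞)`. Composing a solution of `ẋ = f(x)` with such a function turns the two
one-sided limits of `f` at `y` into a single lower bound for a derivative. -/
def brokenLine (a b y z : ℝ) : ℝ := a * min (z - y) 0 + b * max (z - y) 0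

lemma lipschitzWith_brokenLine (a b y : ℝ) :
    LipschitzWith (‖a‖₊ + ‖b‖₊) (brokenLine a b y) := by
  have hsub : LipschitzWith 1 fun z : ℝ => z - y :=
    LipschitzWith.of_dist_le_mul fun z w => by simp
  have hsum := ((lipschitzWith_smul a).comp (hsub.min_const 0)).add
    ((lipschitzWith_smul b).comp (hsub.max_const 0))
  rwa [mul_one, mul_one] at hsum

lemma brokenLine_self_slope (a y z : ℝ) : brokenLine a a y z = a * (z - y) := by
  rw [brokenLine, ← mul_add, min_add_max, add_zero]

lemma hasDerivAt_brokenLine_of_lt (a b : ℝ) {y z : ℝ} (hz : z < y) :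
    HasDerivAt (brokenLine a b y) a z := by
  have hline : HasDerivAt (fun w => a * (w - y)) a z := by
    simpa only [mul_one] using ((hasDerivAt_id' z).sub_const y).const_mul a
  refine hline.congr_of_eventuallyEq ?_
  filter_upwards [Iio_mem_nhds hz] with w (hw : w < y)
  simp [brokenLine, hw.le]

lemma hasDerivAt_brokenLine_of_gt (a b : ℝ) {y z : ℝ} (hz : y < z) :
    HasDerivAt (brokenLine a b y) b z := by
  have hline : HasDerivAt (fun w => b * (w - y)) b z := by
    simpa only [mul_one] using ((hasDerivAt_id' z).sub_const y).const_mul b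
  refine hline.congr_of_eventuallyEq ?_
  filter_upwards [Ioi_mem_nhds hz] with w (hw : y < w)
  simp [brokenLine, hw.le]

lemma Regulated.eventually_hasDerivAt_brokenLine {f fl fr : ℝ → ℝ} (hf : Regulated f fl fr)
    {a b c y : ℝ} (hl : c < a * fl y) (hr : c < b * fr y) :
    ∀ᶠ z in 𝓝[≠] y, ∃ p, HasDerivAt (brokenLine a b y) p z ∧ c ≤ p * f z := by
  rw [← nhdsLT_sup_nhdsGT, eventually_sup]
  constructor
  · filter_upwards [((hf y).1.const_mul a).eventually_const_lt hl, self_mem_nhdsWithin]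
      with z hz hzy using ⟨a, hasDerivAt_brokenLine_of_lt a b hzy, hz.le⟩
  · filter_upwards [((hf y).2.const_mul b).eventually_const_lt hr, self_mem_nhdsWithin]
      with z hz hzy using ⟨b, hasDerivAt_brokenLine_of_gt a b hzy, hz.le⟩

/-! ### Carathéodory solutions -/

/-- `x` restricted to `[0, ∞)` is a Carathéodory solution of `ẋ = f(x)`. The interval integral is
`0` where `f ∘ x` is not integrable; for bounded measurable `f` this does not occur, by
`IsCaratheodorySolution.intervalIntegrable`. -/
def IsCaratheodorySolution (f x : ℝ → ℝ) : Prop :=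
  ∀ t : ℝ, 0 ≤ t → x t = x 0 + ∫ s in (0 : ℝ)..t, f (x s)

namespace IsCaratheodorySolution

variable {f x : ℝ → ℝ} {K : ℝ≥0}

lemma lipschitzOnWith_of_intervalIntegrable (hx : IsCaratheodorySolution f x)
    (hK : ∀ y, |f y| ≤ K) {s : Set ℝ} (hs : s ⊆ Ici 0)
    (hint : ∀ t ∈ s, IntervalIntegrable (fun r => f (x r)) volume 0 t) :
    LipschitzOnWith K x s := by
  refine LipschitzOnWith.of_dist_le_mul fun a ha b hb => ?_
  rw [hx a (hs ha), hx b (hs hb), dist_add_left, Real.dist_eq, Real.dist_eq, ← Real.norm_eq_abs,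
    intervalIntegral.integral_interval_sub_left (hint a ha) (hint b hb)]
  exact intervalIntegral.norm_integral_le_of_norm_le_const fun r _ => hK (x r)

-- `x` is Lipschitz up to the time where `f ∘ x` stops being integrable and equals `x 0` after it.
lemma aemeasurable (hx : IsCaratheodorySolution f x) (hK : ∀ y, |f y| ≤ K) :
    AEMeasurable x (volume.restrict (Ici 0)) := by
  set T : Set ℝ := {t | 0 ≤ t ∧ IntervalIntegrable (fun r => f (x r)) volume 0 t}
  have hT0 : T ⊆ Ici 0 := fun t ht => ht.1
  have hT : MeasurableSet T := by
    refine OrdConnected.measurableSet ⟨fun a ha b hb u hu => ?_⟩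
    have hu0 : 0 ≤ u := ha.1.trans hu.1
    refine ⟨hu0, hb.2.mono_set ?_⟩
    rw [uIcc_of_le hu0, uIcc_of_le hb.1]
    exact Icc_subset_Icc_right hu.2
  have hconst : EqOn x (fun _ => x 0) (Ici 0 \ T) := fun t ht => by
    rw [hx t ht.1, intervalIntegral.integral_undef fun h => ht.2 ⟨ht.1, h⟩, add_zero]
  rw [← union_sdiff_cancel hT0, aemeasurable_union_iff]
  refine ⟨?_, ?_⟩
  · exact (hx.lipschitzOnWith_of_intervalIntegrable hK hT0 fun t ht => ht.2).continuousOn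
      |>.aemeasurable hT
  · exact aemeasurable_const.congr
      (ae_restrict_of_forall_mem (measurableSet_Ici.diff hT) hconst.symm)

lemma intervalIntegrable (hx : IsCaratheodorySolution f x) (hf : Measurable f)
    (hK : ∀ y, |f y| ≤ K) {t : ℝ} (ht : 0 ≤ t) :
    IntervalIntegrable (fun r => f (x r)) volume 0 t := by
  have hmeas : AEMeasurable (fun r => f (x r)) (volume.restrict (uIoc 0 t)) := by
    refine hf.comp_aemeasurable ((hx.aemeasurable hK).mono_set fun r hr => ?_)
    rw [uIoc_of_le ht] at hr
    exact hr.1.le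
  exact intervalIntegrable_const.mono_fun' hmeas.aestronglyMeasurable
    (Eventually.of_forall fun r => hK (x r))

lemma lipschitzOnWith (hx : IsCaratheodorySolution f x) (hf : Measurable f)
    (hK : ∀ y, |f y| ≤ K) : LipschitzOnWith K x (Ici 0) :=
  hx.lipschitzOnWith_of_intervalIntegrable hK Subset.rfl fun _ ht =>
    hx.intervalIntegrable hf hK ht

lemma ae_hasDerivAt (hx : IsCaratheodorySolution f x) (hf : Measurable f)
    (hK : ∀ y, |f y| ≤ K) : ∀ᵐ t, 0 < t → HasDerivAt x (f (x t)) t := by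
  have hprimitive (n : ℕ) := (hx.intervalIntegrable hf hK n.cast_nonneg).ae_hasDerivAt_integral
  filter_upwards [ae_all_iff.2 hprimitive] with t ht ht0
  obtain ⟨n, hn⟩ := exists_nat_ge t
  have htn : t ∈ uIcc 0 (n : ℝ) := mem_uIcc_of_le ht0.le hn
  refine ((ht n htn 0 left_mem_uIcc).const_add (x 0)).congr_of_eventuallyEq ?_
  filter_upwards [Ioi_mem_nhds ht0] with u hu using hx u (le_of_lt hu)

end IsCaratheodorySolution

lemma isCaratheodorySolution_of_ae_deriv_eq {f x : ℝ → ℝ} {K : ℝ≥0}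
    (hx : LipschitzOnWith K x (Ici 0)) (hderiv : ∀ᵐ t, 0 < t → deriv x t = f (x t)) :
    IsCaratheodorySolution f x := by
  intro t ht
  have hsub : uIcc 0 t ⊆ Ici 0 := by
    rw [uIcc_of_le ht]
    exact Icc_subset_Ici_self
  have hftc := (hx.mono hsub).absolutelyContinuousOnInterval.integral_deriv_eq_sub
  have hcongr : ∫ s in (0 : ℝ)..t, deriv x s = ∫ s in (0 : ℝ)..t, f (x s) := by
    refine intervalIntegral.integral_congr_ae ?_
    filter_upwards [hderiv] with s hs hst
    rw [uIoc_of_le ht] at hst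
    exact hs hst.1
  rw [← hcongr, hftc, add_sub_cancel]

/-! ### Limits of solutions -/

-- At almost every time spent at the level `y` the derivatives of `x` and of `φ ∘ x` vanish, so the
-- behaviour of `φ` at `y` is irrelevant.
lemma mul_sub_le_comp_sub_comp {f x φ : ℝ → ℝ} {K L : ℝ≥0} {a b c y : ℝ} (hab : a ≤ b)
    (hx : LipschitzOnWith K x (Icc a b)) (hφ : LipschitzWith L φ)
    (hderiv : ∀ᵐ s, s ∈ Icc a b → HasDerivAt x (f (x s)) s) (hfy : f y = 0 → c ≤ 0)
    (hslope : ∀ s ∈ Icc a b, x s ≠ y → ∃ p, HasDerivAt φ p (x s) ∧ c ≤ p * f (x s)) :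
    c * (b - a) ≤ φ (x b) - φ (x a) := by
  have hcomp : AbsolutelyContinuousOnInterval (φ ∘ x) a b := by
    rw [← uIcc_of_le hab] at hx
    exact (hφ.comp_lipschitzOnWith hx).absolutelyContinuousOnInterval
  refine mul_sub_le_sub_of_ae_le_deriv hab hcomp ?_
  filter_upwards [hderiv, ae_deriv_eq_zero_of_mem_countable x (countable_singleton y),
    ae_deriv_eq_zero_of_mem_countable (φ ∘ x) (countable_singleton (φ y))]
    with s hs hlevel hlevel_comp hsab
  by_cases hsy : x s = y
  · have hfy0 : f y = 0 := by rw [← hsy, ← (hs hsab).deriv, hlevel hsy]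
    rw [hlevel_comp (congrArg φ hsy)]
    exact hfy hfy0
  · obtain ⟨p, hp, hcp⟩ := hslope s hsab hsy
    rwa [(hp.comp s (hs hsab)).deriv]

section Limit

variable {ι : Type*} {l : Filter ι} [l.NeBot] {f fl fr w : ℝ → ℝ} {x : ι → ℝ → ℝ} {K : ℝ≥0} {t : ℝ}
  (hx : ∀ i, LipschitzOnWith K (x i) (Ici t))
  (hderiv : ∀ i, ∀ᵐ s, t < s → HasDerivAt (x i) (f (x i s)) s)
  (hlim : ∀ s, t ≤ s → Tendsto (fun i => x i s) l (𝓝 (w s)))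

include hx hderiv hlim

lemma eventually_mul_sub_le_comp_sub_comp_of_tendsto {φ : ℝ → ℝ} {L : ℝ≥0} {c : ℝ}
    (hφ : LipschitzWith L φ) (hfw : f (w t) = 0 → c ≤ 0)
    (hslope : ∀ᶠ z in 𝓝[≠] (w t), ∃ p, HasDerivAt φ p z ∧ c ≤ p * f z) :
    ∀ᶠ u in 𝓝[>] t, c * (u - t) ≤ φ (w u) - φ (w t) := by
  filter_upwards [self_mem_nhdsWithin, eventually_eventually_forall_Icc_mem_of_lipschitzOnWith hx
    (hlim t le_rfl) (eventually_nhdsWithin_iff.1 hslope)] with u (htu : t < u) hnear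
  have hlim_comp (s : ℝ) (hs : t ≤ s) : Tendsto (fun i => φ (x i s)) l (𝓝 (φ (w s))) :=
    (hφ.continuous.tendsto _).comp (hlim s hs)
  refine ge_of_tendsto ((hlim_comp u htu.le).sub (hlim_comp t le_rfl)) ?_
  filter_upwards [hnear] with i hi
  refine mul_sub_le_comp_sub_comp htu.le ((hx i).mono Icc_subset_Ici_self) hφ ?_ hfw hi
  filter_upwards [hderiv i, (countable_singleton t).ae_notMem volume] with s hs hst hsI
  exact hs (lt_of_le_of_ne hsI.1 (Ne.symm hst))

lemma le_of_hasDerivAt_brokenLine_comp (hf : Regulated f fl fr) {a b c v : ℝ}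
    (hl : c < a * fl (w t)) (hr : c < b * fr (w t)) (hfw : f (w t) = 0 → c ≤ 0)
    (hv : HasDerivAt (brokenLine a b (w t) ∘ w) v t) : c ≤ v :=
  le_of_hasDerivWithinAt_of_eventually_mul_sub_le hv.hasDerivWithinAt <|
    eventually_mul_sub_le_comp_sub_comp_of_tendsto hx hderiv hlim
      (lipschitzWith_brokenLine a b (w t)) hfw (hf.eventually_hasDerivAt_brokenLine hl hr)

lemma eq_of_hasDerivAt_of_continuousAt (hf : Regulated f fl fr)
    (hcont : ContinuousAt f (w t)) {v : ℝ} (hv : HasDerivAt w v t) : v = f (w t) := by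
  have hmul (a : ℝ) : a * f (w t) ≤ a * v := by
    have hline : HasDerivAt (brokenLine a a (w t) ∘ w) (a * v) t := by
      simpa only [Function.comp_def, brokenLine_self_slope] using
        (hv.sub_const (w t)).const_mul a
    refine le_of_forall_lt_imp_le_of_dense fun c hc => ?_
    refine le_of_hasDerivAt_brokenLine_comp hx hderiv hlim hf ?_ ?_ (fun hfw => ?_) hline
    · rwa [hf.leftLim_eq_of_continuousAt hcont]
    · rwa [hf.rightLim_eq_of_continuousAt hcont]
    · rw [hfw, mul_zero] at hc
      exact hc.le
  linarith [hmul 1, hmul (-1)]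

lemma eq_zero_of_hasDerivAt_zero (hf : Regulated f fl fr)
    (hzero : fl (w t) * fr (w t) = 0 → f (w t) = 0) (hw : HasDerivAt w 0 t) : f (w t) = 0 := by
  by_contra hne
  obtain ⟨hl, hr⟩ := mul_ne_zero_iff.1 (mt hzero hne)
  obtain ⟨c, hc, hcmin⟩ := exists_between (lt_min (mul_self_pos.2 hl) (mul_self_pos.2 hr))
  refine hc.not_ge <| le_of_hasDerivAt_brokenLine_comp hx hderiv hlim hf (lt_min_iff.1 hcmin).1
    (lt_min_iff.1 hcmin).2 (absurd · hne) ?_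
  exact hasDerivAt_zero_comp_of_lipschitzWith (lipschitzWith_brokenLine _ _ _) hw

end Limit

theorem caratheodory_solutions_closed_general {ι : Type*} {l : Filter ι} [l.NeBot]
    {f fl fr : ℝ → ℝ} {M : ℝ} (hb : ∀ y, |f y| ≤ M) (hreg : Regulated f fl fr)
    (hzero : ∀ y, fl y * fr y = 0 → f y = 0) {x : ι → ℝ → ℝ} {w : ℝ → ℝ}
    (hsol : ∀ i, IsCaratheodorySolution f (x i))
    (hlim : ∀ t, 0 ≤ t → Tendsto (fun i => x i t) l (𝓝 (w t))) :
    IsCaratheodorySolution f w := by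
  lift M to ℝ≥0 using (abs_nonneg _).trans (hb 0)
  have hlip (i : ι) : LipschitzOnWith M (x i) (Ici 0) := (hsol i).lipschitzOnWith hreg.measurable hb
  have hderiv (i : ι) : ∀ᵐ t, 0 < t → HasDerivAt (x i) (f (x i t)) t :=
    (hsol i).ae_hasDerivAt hreg.measurable hb
  have hw : LipschitzOnWith M w (Ici 0) := lipschitzOnWith_of_tendsto hlip hlim
  refine isCaratheodorySolution_of_ae_deriv_eq hw ?_
  filter_upwards [hw.ae_differentiableWithinAt_of_mem_real,
    ae_deriv_eq_zero_of_mem_countable w hreg.countable_not_continuousAt] with t hdiff hdisc ht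
  have hwt : HasDerivAt w (deriv w t) t :=
    ((hdiff ht.le).differentiableAt (Ici_mem_nhds ht)).hasDerivAt
  have hlip_t (i : ι) := (hlip i).mono (Ici_subset_Ici.2 ht.le)
  have hderiv_t (i : ι) := (hderiv i).mono fun s hs hts => hs (ht.trans hts)
  have hlim_t (s : ℝ) (hts : t ≤ s) := hlim s (ht.le.trans hts)
  by_cases hcont : ContinuousAt f (w t)
  · exact eq_of_hasDerivAt_of_continuousAt hlip_t hderiv_t hlim_t hreg hcont hwt
  · rw [hdisc hcont] at hwt ⊢
    exact (eq_zero_of_hasDerivAt_zero hlip_t hderiv_t hlim_t hreg (hzero (w t)) hwt).symm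

/-- The set of Carathéodory solutions of `ẋ = f(x)` is closed under uniform
convergence on bounded sets. -/
theorem caratheodory_solutions_closed
    (f : ℝ → ℝ) (M : ℝ) (hb : ∀ y : ℝ, |f y| ≤ M)
    (fl fr : ℝ → ℝ) (hreg : Regulated f fl fr) (hnj : NoJamming f fl fr)
    (xn : ℕ → ℝ → ℝ)
    (hsol : ∀ n : ℕ, ∀ t : ℝ, 0 ≤ t → xn n t = xn n 0 + ∫ s in (0:ℝ)..t, f (xn n s))
    (xbar : ℝ → ℝ)
    (hconv : ∀ R : ℝ, 0 < R → TendstoUniformlyOn xn xbar Filter.atTop (Set.Icc 0 R)) :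
    ∀ t : ℝ, 0 ≤ t → xbar t = xbar 0 + ∫ s in (0:ℝ)..t, f (xbar s) := by
  exact caratheodory_solutions_closed_general hb hreg (fun y hy => hnj y (.inl hy)) hsol fun t ht =>
    (hconv (t + 1) (by linarith)).tendsto_at ⟨ht, by linarith⟩
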